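/- arXiv:2106.00391 — 3 statements merged into one kernel-verified Lean document; each statement's English description precedes it below -/
import Mathlib

section
/- Negative-delay indistinguishability (first case of Theorem 1): let τ and τ' be real numbers with τ' < τ < 0. Then for every admissible trajectory x : ℝ → ℝ (a 1-Lipschitz function), there exists an admissible trajectory x' : ℝ → ℝ (1-Lipschitz) such that x'(t) = x(t) for all t ∈ [0, −τ] (in particular x'(0) = x(0), and the two systems experience the same applied control on the observation interval), and the delayed outputs coincide on the observation interval: x'(t + τ') = x(t + τ) for all t ∈ [0, −τ]. Hence the systems with delays τ and τ' produce identical outputs y(t) = x(t + τ) and y'(t) = x'(t + τ') over [0, −τ] and the two delay values are indistinguishable over that interval. -/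
/-!
The delayed trajectory plays `x` along a clock that pauses. Up to time `τ' - τ` it runs ahead of
`x` by `τ - τ'`, so it reaches `x 0` early; it rests there until time `0`, and then resumes in
step with `x`. The clock never runs faster than real time, so the Lipschitz constant is preserved.
-/

theorem lipschitzWith_one_of_monotone_of_monotone_sub {f : ℝ → ℝ} (hf : Monotone f)
    (hsub : Monotone fun t => t - f t) : LipschitzWith 1 f := by
  refine LipschitzWith.of_le_add fun s t => ?_
  rcases le_total s t with hst | hts
  · exact (hf hst).trans (le_add_of_nonneg_right dist_nonneg)
  · have lag_le : t - f t ≤ s - f s := hsub hts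
    rw [Real.dist_eq, abs_of_nonneg (sub_nonneg.mpr hts)]
    linarith

/-- The clock that, for `0 ≤ d`, runs at unit speed except on `[-d, 0]`, where it rests at `0`:
it reads `t + d` before the pause and `t` after it. For `d < 0` it instead runs at double speed
on `[0, -d]`. -/
noncomputable def pausedClock (d t : ℝ) : ℝ :=
  max t 0 + min (t + d) 0

section PausedClock

variable {d t : ℝ}

theorem pausedClock_of_nonneg (hd : 0 ≤ d) (ht : 0 ≤ t) : pausedClock d t = t := by
  rw [pausedClock, max_eq_left ht, min_eq_right (add_nonneg ht hd), add_zero]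

theorem pausedClock_of_le_neg (hd : 0 ≤ d) (ht : t ≤ -d) : pausedClock d t = t + d := by
  rw [pausedClock, max_eq_right (ht.trans (neg_nonpos.mpr hd)), min_eq_left (by linarith),
    zero_add]

theorem monotone_pausedClock (d : ℝ) : Monotone (pausedClock d) :=
  fun s t hst => by unfold pausedClock; gcongr

theorem sub_pausedClock (hd : 0 ≤ d) (t : ℝ) : t - pausedClock d t = max (-d) (min t 0) := by
  unfold pausedClock
  grind

theorem lipschitzWith_pausedClock (hd : 0 ≤ d) : LipschitzWith 1 (pausedClock d) := by
  refine lipschitzWith_one_of_monotone_of_monotone_sub (monotone_pausedClock d) fun s t hst => ?_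
  simp only [sub_pausedClock hd]
  gcongr

end PausedClock

theorem neg_delay_indistinguishable_general {E : Type*} [PseudoEMetricSpace E] {K : NNReal}
    {τ τ' : ℝ} (hτ' : τ' ≤ τ) {x : ℝ → E} (hx : LipschitzWith K x) :
    ∃ x' : ℝ → E, LipschitzWith K x' ∧
      (∀ t, 0 ≤ t → x' t = x t) ∧
      (∀ t ≤ -τ, x' (t + τ') = x (t + τ)) := by
  have pause_nonneg : 0 ≤ τ - τ' := sub_nonneg.mpr hτ'
  refine ⟨x ∘ pausedClock (τ - τ'), ?_, fun t ht => ?_, fun t ht => ?_⟩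
  · simpa only [mul_one] using hx.comp (lipschitzWith_pausedClock pause_nonneg)
  · rw [Function.comp_apply, pausedClock_of_nonneg pause_nonneg ht]
  · have before_pause : t + τ' ≤ -(τ - τ') := by linarith
    rw [Function.comp_apply, pausedClock_of_le_neg pause_nonneg before_pause,
      add_assoc, add_sub_cancel]

/-- Negative-delay indistinguishability (first case of Theorem 1):
if `τ' < τ < 0`, then for every 1-Lipschitz trajectory `x` there is a
1-Lipschitz trajectory `x'` agreeing with `x` on `[0, −τ]` (same state and
applied control on the observation interval) whose `τ'`-delayed output matches
the `τ`-delayed output of `x` on `[0, −τ]`. -/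
theorem neg_delay_indistinguishable (τ τ' : ℝ) (hτ' : τ' < τ) (hτ : τ < 0)
    (x : ℝ → ℝ) (hx : LipschitzWith 1 x) :
    ∃ x' : ℝ → ℝ, LipschitzWith 1 x' ∧
      (∀ t ∈ Set.Icc (0 : ℝ) (-τ), x' t = x t) ∧
      (∀ t ∈ Set.Icc (0 : ℝ) (-τ), x' (t + τ') = x (t + τ)) := by
  obtain ⟨x', hx', state_eq, output_eq⟩ := neg_delay_indistinguishable_general hτ'.le hx
  exact ⟨x', hx', fun t ht => state_eq t ht.1, fun t ht => output_eq t ht.2⟩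
end

section
/- Positive-delay indistinguishability (second case of Theorem 1): let τ and τ' be real numbers with 0 < τ < τ'. Then for every admissible trajectory x : ℝ → ℝ (a 1-Lipschitz function), there exists an admissible trajectory x' : ℝ → ℝ (1-Lipschitz) such that x'(t) = x(t) for all t ∈ [0, τ] (in particular x'(0) = x(0), and the two systems experience the same applied control on the observation interval), and the delayed outputs coincide on the observation interval: x'(t + τ') = x(t + τ) for all t ∈ [0, τ]. Hence the systems with delays τ and τ' produce identical outputs y(t) = x(t + τ) and y'(t) = x'(t + τ') over [0, τ] and the two delay values are indistinguishable over that interval. -/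
/-! The trajectory `x'` follows `x` up to time `τ`, waits there with zero control for the duration
`τ' - τ`, and then resumes `x`. It is `x` precomposed with a 1-Lipschitz change of time, hence is
admissible whenever `x` is. -/

open scoped NNReal

/-- The change of time that runs as `t` until time `a`, stands still at `a` for the duration `d`,
and then runs as `t - d`. The closed form describes such a pause only for `0 ≤ d`. -/
def pauseTime (a d t : ℝ) : ℝ :=
  max (min t a) (t - d)

namespace pauseTime

variable {a d t : ℝ}

theorem eq_self_of_le (hd : 0 ≤ d) (ht : t ≤ a) : pauseTime a d t = t := by
  rw [pauseTime, min_eq_left ht, max_eq_left (sub_le_self t hd)]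

theorem eq_sub_of_add_le (ht : a + d ≤ t) : pauseTime a d t = t - d :=
  max_eq_right ((min_le_right t a).trans (le_sub_iff_add_le.mpr ht))

theorem lipschitzWith_one (a d : ℝ) : LipschitzWith 1 (pauseTime a d) := by
  have h_sub : LipschitzWith 1 fun t : ℝ => t - d := (IsometryEquiv.subRight d).isometry.lipschitz
  exact max_self (1 : ℝ≥0) ▸ (LipschitzWith.id.min_const a).max h_sub

end pauseTime

theorem pos_delay_indistinguishable_general {E : Type*} [PseudoEMetricSpace E] {K : ℝ≥0}
    {τ τ' : ℝ} (hτ' : τ ≤ τ') {x : ℝ → E} (hx : LipschitzWith K x) :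
    ∃ x' : ℝ → E, LipschitzWith K x' ∧
      (∀ t ≤ τ, x' t = x t) ∧ (∀ t, 0 ≤ t → x' (t + τ') = x (t + τ)) := by
  refine ⟨x ∘ pauseTime τ (τ' - τ), ?_, fun t ht => ?_, fun t ht => ?_⟩
  · exact mul_one K ▸ hx.comp (pauseTime.lipschitzWith_one τ (τ' - τ))
  · exact congrArg x (pauseTime.eq_self_of_le (sub_nonneg.mpr hτ') ht)
  · have h_resumed : pauseTime τ (τ' - τ) (t + τ') = t + τ := by
      rw [pauseTime.eq_sub_of_add_le (by linarith)]
      ring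
    exact congrArg x h_resumed

/-- Positive-delay indistinguishability (second case of Theorem 1):
if `0 < τ < τ'`, then for every 1-Lipschitz trajectory `x` there is a
1-Lipschitz trajectory `x'` agreeing with `x` on `[0, τ]` (same state and
applied control on the observation interval) whose `τ'`-delayed output matches
the `τ`-delayed output of `x` on `[0, τ]`. -/
theorem pos_delay_indistinguishable (τ τ' : ℝ) (hτ : 0 < τ) (hτ' : τ < τ')
    (x : ℝ → ℝ) (hx : LipschitzWith 1 x) :
    ∃ x' : ℝ → ℝ, LipschitzWith 1 x' ∧
      (∀ t ∈ Set.Icc (0 : ℝ) τ, x' t = x t) ∧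
      (∀ t ∈ Set.Icc (0 : ℝ) τ, x' (t + τ') = x (t + τ)) := by
  obtain ⟨x', hx', h_state, h_output⟩ := pos_delay_indistinguishable_general hτ'.le hx
  exact ⟨x', hx', fun t ht => h_state t ht.2, fun t ht => h_output t ht.1⟩
end

section
/- Theorem 1 (unidentifiability of the delay in time ≤ τ₊): let τ ∈ ℝ with τ ≠ 0, write τ₊ = |τ|, and let T be any real number with 0 ≤ T ≤ τ₊. Then there exists τ' ∈ ℝ with τ' ≠ τ such that for every admissible trajectory x : ℝ → ℝ (a 1-Lipschitz function) there exists an admissible trajectory x' : ℝ → ℝ (1-Lipschitz) with x'(t) = x(t) for all t ∈ [0, T] and x'(t + τ') = x(t + τ) for all t ∈ [0, T]. Consequently, the delay parameter τ of the system Σ cannot be identified from the input and output observed over any interval of length less than or equal to τ₊. -/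
/-! Since `T ≤ |τ|`, the windows `[0, T]` and `[τ, τ + T]` meet in at most one point. Freezing the
trajectory at a time between them pushes the windows apart by the length of the pause without
raising the Lipschitz constant, so a delay farther from `0` on the same side as `τ` produces the
same data. -/

/-- The time change that runs normally until time `a`, stays at `a` for a duration `d ≥ 0`, and
then resumes. Composing a trajectory with it inserts a pause. -/
noncomputable def pause (a d s : ℝ) : ℝ := min s (max a (s - d))

section pause

variable {a d s : ℝ}

lemma lipschitzWith_pause : LipschitzWith 1 (pause a d) := by
  have shift : LipschitzWith 1 fun s : ℝ => s - d := (IsometryEquiv.subRight d).isometry.lipschitz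
  exact (LipschitzWith.id.min (shift.const_max a)).weaken (max_self 1).le

lemma pause_of_le (hs : s ≤ a) : pause a d s = s :=
  min_eq_left (hs.trans (le_max_left _ _))

lemma pause_add_of_le (hd : 0 ≤ d) (hs : a ≤ s) : pause a d (s + d) = s := by
  simp [pause, hs, hd]

end pause

lemma mem_uIcc_zero_two_mul (r : ℝ) : r ∈ Set.uIcc 0 (2 * r) := by
  rcases le_total 0 r with h | h
  · exact Set.mem_uIcc_of_le h (by linarith)
  · exact Set.mem_uIcc_of_ge (by linarith) h

theorem delay_unidentifiable_general {E : Type*} [PseudoEMetricSpace E] {K : NNReal}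
    {τ τ' T : ℝ} (hτ' : τ ∈ Set.uIcc 0 τ') (hT : T ≤ |τ|) {x : ℝ → E} (hx : LipschitzWith K x) :
    ∃ x' : ℝ → E, LipschitzWith K x' ∧
      (∀ t ∈ Set.Icc (0 : ℝ) T, x' t = x t) ∧
      (∀ t ∈ Set.Icc (0 : ℝ) T, x' (t + τ') = x (t + τ)) := by
  rcases Set.mem_uIcc.mp hτ' with ⟨hτ, hle⟩ | ⟨hle, hτ⟩
  · rw [abs_of_nonneg hτ] at hT
    refine ⟨x ∘ pause τ (τ' - τ), by simpa using hx.comp lipschitzWith_pause,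
      fun t ht => congrArg x (pause_of_le (ht.2.trans hT)), fun t ht => congrArg x ?_⟩
    rw [show t + τ' = t + τ + (τ' - τ) by ring]
    exact pause_add_of_le (sub_nonneg.mpr hle) (le_add_of_nonneg_left ht.1)
  · rw [abs_of_nonpos hτ] at hT
    -- The output window comes first, so the clock starts ahead and the pause ends at time `0`.
    have shift : LipschitzWith 1 fun s : ℝ => s + (τ - τ') :=
      (IsometryEquiv.addRight (τ - τ')).isometry.lipschitz
    refine ⟨x ∘ pause 0 (τ - τ') ∘ (· + (τ - τ')),
      by simpa using hx.comp (lipschitzWith_pause.comp shift),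
      fun t ht => congrArg x (pause_add_of_le (sub_nonneg.mpr hle) ht.1),
      fun t ht => congrArg x ?_⟩
    rw [Function.comp_apply, show t + τ' + (τ - τ') = t + τ by ring]
    exact pause_of_le (by linarith [ht.2])

/-- Theorem 1 (unidentifiability of the delay in time `≤ τ₊`):
for `τ ≠ 0` and any `T` with `0 ≤ T ≤ |τ|`, there exists `τ' ≠ τ` such that
for every 1-Lipschitz trajectory `x` there is a 1-Lipschitz trajectory `x'`
agreeing with `x` on `[0, T]` whose `τ'`-delayed output matches the
`τ`-delayed output of `x` on `[0, T]`; hence `τ` cannot be identified from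
input-output data observed over any interval of length at most `τ₊ = |τ|`. -/
theorem delay_unidentifiable (τ T : ℝ) (hτ : τ ≠ 0) (hT0 : 0 ≤ T)
    (hT : T ≤ |τ|) :
    ∃ τ' : ℝ, τ' ≠ τ ∧
      ∀ x : ℝ → ℝ, LipschitzWith 1 x →
        ∃ x' : ℝ → ℝ, LipschitzWith 1 x' ∧
          (∀ t ∈ Set.Icc (0 : ℝ) T, x' t = x t) ∧
          (∀ t ∈ Set.Icc (0 : ℝ) T, x' (t + τ') = x (t + τ)) :=
  ⟨2 * τ, fun h => hτ (by linarith),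
    fun _ hx => delay_unidentifiable_general (mem_uIcc_zero_two_mul τ) hT hx⟩
end
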